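/- arXiv:2203.01999 — 2 statements merged into one kernel-verified Lean document; each statement's English description precedes it below -/
import Mathlib

section
/- Let n, p, m be positive natural numbers, θ ∈ ℝ^p, γ > 0, c₁, c₂, c₃ > 0, and let Γ be a symmetric positive definite real p×p matrix with μ_min, μ_max the smallest and largest eigenvalues of Γ⁻¹; set η₁ := min(c₁, μ_min/2) and η₂ := max(c₂, μ_max/2). Let V : ℝⁿ → ℝ be differentiable with gradient ∇V and satisfy c₁‖x‖² ≤ V(x) ≤ c₂‖x‖² for all x. Let f, Y, g, u, Λ be as follows: f : ℝⁿ → ℝⁿ, Y : ℝⁿ → Matrix (Fin n) (Fin p) ℝ, g : ℝⁿ → Matrix (Fin n) (Fin m) ℝ, u : ℝ → ℝᵐ, and Λ : ℝ → Matrix (Fin p) (Fin p) ℝ with each Λ(t) symmetric positive semidefinite. Suppose x : ℝ → ℝⁿ and θ̂ : ℝ → ℝ^p are differentiable with x'(t) = f(x(t)) + Y(x(t))·θ + g(x(t))·u(t) and θ̂'(t) = Γ·((Y(x(t)))ᵀ·∇V(x(t))) + γ·Γ·Λ(t)·(θ − θ̂(t)) for all t ≥ 0, and that the control satisfies the aCLF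 condition ⟨∇V(x(t)), f(x(t)) + Y(x(t))·θ̂(t) + g(x(t))·u(t)⟩ ≤ −c₃·V(x(t)) for all t ≥ 0. Then for all t ≥ 0: ‖x(t)‖² + ‖θ − θ̂(t)‖² ≤ (η₂/η₁)·(‖x(0)‖² + ‖θ − θ̂(0)‖²). -/
open scoped InnerProductSpace

/-!
The composite Lyapunov function `W(x, e) = V(x) + ½ ⟪Γ⁻¹ e, e⟫`, with `e = θ - θ̂` the parameter
error, is designed so that the unknown `θ` drops out of its derivative: the gradient part of the
update law contributes `-⟪∇V(x), Y(x) e⟫`, which turns `Y(x) θ` into `Y(x) θ̂`. What is left is the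
quantity controlled by the aCLF condition minus `γ ⟪Λ e, e⟫ ≥ 0`. Hence `W` does not increase along
trajectories, and the quadratic bounds on `V` and on `Γ⁻¹` sandwich `W` between `η₁ (‖x‖² + ‖e‖²)`
and `η₂ (‖x‖² + ‖e‖²)`.
-/

section Matrix

variable {𝕜 n : Type*} [RCLike 𝕜] [Fintype n] [DecidableEq n]

theorem adjoint_toEuclideanLin_apply {m : Type*} [Fintype m] [DecidableEq m] (A : Matrix m n ℝ)
    (w : EuclideanSpace ℝ m) :
    (Matrix.toEuclideanLin A).toContinuousLinearMap.adjoint w =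
      Matrix.toEuclideanLin A.transpose w := by
  rw [← Matrix.conjTranspose_eq_transpose_of_trivial,
    Matrix.toEuclideanLin_conjTranspose_eq_adjoint, LinearMap.adjoint_eq_toCLM_adjoint,
    ContinuousLinearMap.coe_coe]

theorem toEuclideanCLM_inv_apply_toEuclideanCLM {A : Matrix n n 𝕜} (hA : IsUnit A)
    (v : EuclideanSpace 𝕜 n) :
    Matrix.toEuclideanCLM (𝕜 := 𝕜) A⁻¹ (Matrix.toEuclideanCLM (𝕜 := 𝕜) A v) = v := by
  rw [← mul_apply_eq_comp, ← map_mul,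
    Matrix.nonsing_inv_mul A (A.isUnit_iff_isUnit_det.mp hA), map_one,
    one_apply_eq_self]

variable {A : Matrix n n 𝕜} (hA : A.IsHermitian)

theorem re_inner_toEuclideanCLM_self_eq_sum (v : EuclideanSpace 𝕜 n) :
    RCLike.re ⟪Matrix.toEuclideanCLM (𝕜 := 𝕜) A v, v⟫_𝕜 =
      ∑ i, hA.eigenvalues i * ‖⟪hA.eigenvectorBasis i, v⟫_𝕜‖ ^ 2 := by
  rw [← hA.eigenvectorBasis.sum_inner_mul_inner, map_sum]
  refine Finset.sum_congr rfl fun i _ => ?_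
  have eigen : Matrix.toEuclideanLin A (hA.eigenvectorBasis i) =
      (hA.eigenvalues i : 𝕜) • hA.eigenvectorBasis i := by
    rw [Matrix.toLpLin_apply, hA.mulVec_eigenvectorBasis, RCLike.real_smul_eq_coe_smul (K := 𝕜)]
    rfl
  have symm : ⟪Matrix.toEuclideanCLM (𝕜 := 𝕜) A v, hA.eigenvectorBasis i⟫_𝕜 =
      hA.eigenvalues i * ⟪v, hA.eigenvectorBasis i⟫_𝕜 := by
    rw [← inner_smul_right, ← eigen]
    exact Matrix.isSymmetric_toEuclideanLin_iff.mpr hA v _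
  rw [symm, mul_assoc, RCLike.re_ofReal_mul, inner_mul_symm_re_eq_norm, norm_mul,
    norm_inner_symm v, sq]

theorem iInf_eigenvalues_mul_le_re_inner_toEuclideanCLM_self (v : EuclideanSpace 𝕜 n) :
    (⨅ i, hA.eigenvalues i) * ‖v‖ ^ 2 ≤
      RCLike.re ⟪Matrix.toEuclideanCLM (𝕜 := 𝕜) A v, v⟫_𝕜 := by
  rw [re_inner_toEuclideanCLM_self_eq_sum hA, ← hA.eigenvectorBasis.sum_sq_norm_inner_right,
    Finset.mul_sum]
  gcongr with i
  exact ciInf_le (Set.finite_range _).bddBelow i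

theorem re_inner_toEuclideanCLM_self_le_iSup_eigenvalues_mul (v : EuclideanSpace 𝕜 n) :
    RCLike.re ⟪Matrix.toEuclideanCLM (𝕜 := 𝕜) A v, v⟫_𝕜 ≤
      (⨆ i, hA.eigenvalues i) * ‖v‖ ^ 2 := by
  rw [re_inner_toEuclideanCLM_self_eq_sum hA, ← hA.eigenvectorBasis.sum_sq_norm_inner_right,
    Finset.mul_sum]
  gcongr with i
  exact le_ciSup (Set.finite_range _).bddAbove i

open scoped ComplexOrder in
theorem iInf_eigenvalues_pos [Nonempty n] (hpos : A.PosDef) : 0 < ⨅ i, hA.eigenvalues i := by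
  obtain ⟨i, hi⟩ := exists_eq_ciInf_of_finite (f := hA.eigenvalues)
  exact hi ▸ hA.posDef_iff_eigenvalues_pos.mp hpos i

end Matrix

section CompositeLyapunov

variable {E F : Type*} [NormedAddCommGroup E] [NormedAddCommGroup F] [InnerProductSpace ℝ F]

/-- The composite Lyapunov function of an adaptive controller, in the plant state `x` and the
parameter error `e`. The operator `P` stands for the inverse `Γ⁻¹` of the adaptation gain. -/
noncomputable def compositeLyapunov (V : E → ℝ) (P : F →L[ℝ] F) (x : E) (e : F) : ℝ :=
  V x + ⟪P e, e⟫_ℝ / 2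

variable {V : E → ℝ} {P Γ : F →L[ℝ] F}

theorem min_mul_le_compositeLyapunov {c μ : ℝ} {x : E} {e : F} (hV : c * ‖x‖ ^ 2 ≤ V x)
    (hP : μ * ‖e‖ ^ 2 ≤ ⟪P e, e⟫_ℝ) :
    min c (μ / 2) * (‖x‖ ^ 2 + ‖e‖ ^ 2) ≤ compositeLyapunov V P x e :=
  calc min c (μ / 2) * (‖x‖ ^ 2 + ‖e‖ ^ 2)
      = min c (μ / 2) * ‖x‖ ^ 2 + min c (μ / 2) * ‖e‖ ^ 2 := mul_add ..
    _ ≤ c * ‖x‖ ^ 2 + μ / 2 * ‖e‖ ^ 2 := by gcongr <;> simp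
    _ ≤ V x + ⟪P e, e⟫_ℝ / 2 := by linarith

theorem compositeLyapunov_le_max_mul {c μ : ℝ} {x : E} {e : F} (hV : V x ≤ c * ‖x‖ ^ 2)
    (hP : ⟪P e, e⟫_ℝ ≤ μ * ‖e‖ ^ 2) :
    compositeLyapunov V P x e ≤ max c (μ / 2) * (‖x‖ ^ 2 + ‖e‖ ^ 2) :=
  calc V x + ⟪P e, e⟫_ℝ / 2
      ≤ c * ‖x‖ ^ 2 + μ / 2 * ‖e‖ ^ 2 := by linarith
    _ ≤ max c (μ / 2) * ‖x‖ ^ 2 + max c (μ / 2) * ‖e‖ ^ 2 := by gcongr <;> simp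
    _ = max c (μ / 2) * (‖x‖ ^ 2 + ‖e‖ ^ 2) := (mul_add ..).symm

variable [InnerProductSpace ℝ E] [CompleteSpace E]

theorem hasDerivWithinAt_compositeLyapunov (hP : P.IsSymmetric) {x : ℝ → E} {e : ℝ → F}
    {v x' : E} {e' : F} {s : Set ℝ} {t : ℝ} (hV : HasGradientAt V v (x t))
    (hx : HasDerivWithinAt x x' s t) (he : HasDerivWithinAt e e' s t) :
    HasDerivWithinAt (fun r => compositeLyapunov V P (x r) (e r))
      (⟪v, x'⟫_ℝ + ⟪P (e t), e'⟫_ℝ) s t := by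
  have hVx : HasDerivWithinAt (fun r => V (x r)) ⟪v, x'⟫_ℝ s t :=
    hV.hasFDerivAt.comp_hasDerivWithinAt t hx
  have hPe : HasDerivWithinAt (fun r => P (e r)) (P e') s t :=
    P.hasFDerivAt.comp_hasDerivWithinAt t he
  refine (hVx.add ((hPe.inner ℝ he).div_const 2)).congr_deriv ?_
  have symm : ⟪P e', e t⟫_ℝ = ⟪P (e t), e'⟫_ℝ := (hP e' (e t)).trans (real_inner_comm _ _)
  rw [symm, add_self_div_two]

theorem antitoneOn_compositeLyapunov (hP : P.IsSymmetric) {x v x' : ℝ → E} {e e' : ℝ → F}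
    {s : Set ℝ} (hs : Convex ℝ s) (hV : ∀ t ∈ s, HasGradientAt V (v t) (x t))
    (hx : ∀ t ∈ s, HasDerivWithinAt x (x' t) s t) (he : ∀ t ∈ s, HasDerivWithinAt e (e' t) s t)
    (hdecr : ∀ t ∈ s, ⟪v t, x' t⟫_ℝ + ⟪P (e t), e' t⟫_ℝ ≤ 0) :
    AntitoneOn (fun t => compositeLyapunov V P (x t) (e t)) s := by
  have hderiv := fun t ht => hasDerivWithinAt_compositeLyapunov hP (hV t ht) (hx t ht) (he t ht)
  exact antitoneOn_of_hasDerivWithinAt_nonpos hs (fun t ht => (hderiv t ht).continuousWithinAt)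
    (fun t ht => (hderiv t (interior_subset ht)).mono interior_subset)
    (fun t ht => hdecr t (interior_subset ht))

variable [CompleteSpace F]

theorem compositeLyapunov_rate_eq (hP : P.IsSymmetric) (hΓ : Function.LeftInverse P Γ)
    (γ : ℝ) (Y : F →L[ℝ] E) (Λ : F →L[ℝ] F) (v a b : E) (θ θhat : F) :
    ⟪v, a + Y θ + b⟫_ℝ +
        ⟪P (θ - θhat), -(Γ (Y.adjoint v) + γ • Γ (Λ (θ - θhat)))⟫_ℝ =
      ⟪v, a + Y θhat + b⟫_ℝ - γ * ⟪θ - θhat, Λ (θ - θhat)⟫_ℝ := by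
  have cancel (d w : F) : ⟪P d, Γ w⟫_ℝ = ⟪d, w⟫_ℝ := (hP d (Γ w)).trans (congrArg _ (hΓ w))
  have cross : ⟪θ - θhat, Y.adjoint v⟫_ℝ = ⟪v, Y θ⟫_ℝ - ⟪v, Y θhat⟫_ℝ := by
    rw [ContinuousLinearMap.adjoint_inner_right, real_inner_comm, map_sub, inner_sub_right]
  simp only [inner_neg_right, inner_add_right, inner_smul_right, cancel, cross]
  ring

theorem es_aclf_composite_boundedness_general {U : Type*} [AddCommGroup U] [Module ℝ U]
    (θ : F) {γ : ℝ} (hγ : 0 ≤ γ) {c₁ c₂ μmin μmax : ℝ} (hc₁ : 0 < c₁) (hμmin : 0 < μmin)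
    (hP : P.IsSymmetric) (hΓ : Function.LeftInverse P Γ)
    (hPbound : ∀ e, μmin * ‖e‖ ^ 2 ≤ ⟪P e, e⟫_ℝ ∧ ⟪P e, e⟫_ℝ ≤ μmax * ‖e‖ ^ 2)
    {gradV : E → E} (hV : ∀ y, HasGradientAt V (gradV y) y)
    (hVbound : ∀ y, c₁ * ‖y‖ ^ 2 ≤ V y ∧ V y ≤ c₂ * ‖y‖ ^ 2)
    {f : E → E} {Y : E → F →L[ℝ] E} {g : E → U →ₗ[ℝ] E} {u : ℝ → U}
    {Λ : ℝ → F →L[ℝ] F} (hΛ : ∀ t, 0 ≤ t → (Λ t).IsPositive) {x : ℝ → E} {θhat : ℝ → F}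
    (hx : ∀ t, 0 ≤ t →
      HasDerivWithinAt x (f (x t) + Y (x t) θ + g (x t) (u t)) (Set.Ici 0) t)
    (hθhat : ∀ t, 0 ≤ t → HasDerivWithinAt θhat
      (Γ ((Y (x t)).adjoint (gradV (x t))) + γ • Γ (Λ t (θ - θhat t))) (Set.Ici 0) t)
    (hclf : ∀ t, 0 ≤ t →
      ⟪gradV (x t), f (x t) + Y (x t) (θhat t) + g (x t) (u t)⟫_ℝ ≤ 0)
    {t : ℝ} (ht : 0 ≤ t) :
    ‖x t‖ ^ 2 + ‖θ - θhat t‖ ^ 2 ≤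
      (max c₂ (μmax / 2) / min c₁ (μmin / 2)) * (‖x 0‖ ^ 2 + ‖θ - θhat 0‖ ^ 2) := by
  have decreasing : AntitoneOn (fun s => compositeLyapunov V P (x s) (θ - θhat s)) (Set.Ici 0) :=
    antitoneOn_compositeLyapunov hP (convex_Ici 0) (fun s _ => hV (x s)) hx
      (fun s hs => (hθhat s hs).const_sub θ) fun s hs => by
        rw [compositeLyapunov_rate_eq hP hΓ]
        exact sub_nonpos.mpr <| (hclf s hs).trans <|
          mul_nonneg hγ ((hΛ s hs).inner_nonneg_right _)
  rw [div_mul_eq_mul_div, le_div_iff₀' (lt_min hc₁ (half_pos hμmin))]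
  calc min c₁ (μmin / 2) * (‖x t‖ ^ 2 + ‖θ - θhat t‖ ^ 2)
      ≤ compositeLyapunov V P (x t) (θ - θhat t) :=
        min_mul_le_compositeLyapunov (hVbound _).1 (hPbound _).1
    _ ≤ compositeLyapunov V P (x 0) (θ - θhat 0) := decreasing Set.self_mem_Ici ht ht
    _ ≤ max c₂ (μmax / 2) * (‖x 0‖ ^ 2 + ‖θ - θhat 0‖ ^ 2) :=
        compositeLyapunov_le_max_mul (hVbound _).2 (hPbound _).2

end CompositeLyapunov

/-- Lemma 2 (boundedness): along the uncertain dynamics `ẋ = f(x) + Y(x)θ + g(x)u`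
with the concurrent-learning aCLF update law
`θ̂' = Γ Y(x)ᵀ ∇V(x) + γ Γ Λ(t)(θ - θ̂)` and the aCLF decrease condition
`⟪∇V(x), f(x) + Y(x)θ̂ + g(x)u⟫ ≤ -c₃ V(x)`, the composite state `z = (x, θ - θ̂)`
satisfies `‖z(t)‖² ≤ (η₂/η₁) ‖z(0)‖²` for all `t ≥ 0`. -/
theorem es_aclf_composite_boundedness
    (n p m : ℕ) (hn : 0 < n) (hp : 0 < p) (hm : 0 < m)
    (θ : EuclideanSpace ℝ (Fin p)) (γ : ℝ) (hγ : 0 < γ)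
    (c₁ c₂ c₃ : ℝ) (hc₁ : 0 < c₁) (hc₂ : 0 < c₂) (hc₃ : 0 < c₃)
    (Γ : Matrix (Fin p) (Fin p) ℝ) (hΓsymm : Γ.IsSymm) (hΓpd : Γ.PosDef)
    (hinv : (Γ⁻¹).IsHermitian)
    (μmin μmax η₁ η₂ : ℝ)
    (hμmin : μmin = ⨅ i, hinv.eigenvalues i)
    (hμmax : μmax = ⨆ i, hinv.eigenvalues i)
    (hη₁ : η₁ = min c₁ (μmin / 2))
    (hη₂ : η₂ = max c₂ (μmax / 2))
    (V : EuclideanSpace ℝ (Fin n) → ℝ)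
    (gradV : EuclideanSpace ℝ (Fin n) → EuclideanSpace ℝ (Fin n))
    (hV : ∀ y, HasGradientAt V (gradV y) y)
    (hVbound : ∀ x, c₁ * ‖x‖ ^ 2 ≤ V x ∧ V x ≤ c₂ * ‖x‖ ^ 2)
    (f : EuclideanSpace ℝ (Fin n) → EuclideanSpace ℝ (Fin n))
    (Y : EuclideanSpace ℝ (Fin n) → Matrix (Fin n) (Fin p) ℝ)
    (g : EuclideanSpace ℝ (Fin n) → Matrix (Fin n) (Fin m) ℝ)
    (u : ℝ → EuclideanSpace ℝ (Fin m))
    (Λ : ℝ → Matrix (Fin p) (Fin p) ℝ)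
    (hΛsymm : ∀ t, (Λ t).IsSymm)
    (hΛpsd : ∀ t, (Λ t).PosSemidef)
    (x : ℝ → EuclideanSpace ℝ (Fin n))
    (θhat : ℝ → EuclideanSpace ℝ (Fin p))
    (hx : ∀ t, 0 ≤ t → HasDerivAt x
      (f (x t) + Matrix.toEuclideanLin (Y (x t)) θ +
        Matrix.toEuclideanLin (g (x t)) (u t)) t)
    (hθhat : ∀ t, 0 ≤ t → HasDerivAt θhat
      (Matrix.toEuclideanLin Γ (Matrix.toEuclideanLin (Y (x t)).transpose (gradV (x t))) +
        γ • Matrix.toEuclideanLin Γ (Matrix.toEuclideanLin (Λ t) (θ - θhat t))) t)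
    (hclf : ∀ t, 0 ≤ t →
      ⟪gradV (x t), f (x t) + Matrix.toEuclideanLin (Y (x t)) (θhat t) +
          Matrix.toEuclideanLin (g (x t)) (u t)⟫_ℝ ≤ -c₃ * V (x t)) :
    ∀ t, 0 ≤ t →
      ‖x t‖ ^ 2 + ‖θ - θhat t‖ ^ 2 ≤
        (η₂ / η₁) * (‖x 0‖ ^ 2 + ‖θ - θhat 0‖ ^ 2) := by
  subst hμmin hμmax hη₁ hη₂
  have : Nonempty (Fin p) := ⟨⟨0, hp⟩⟩
  have hV_nonneg (y) : 0 ≤ V y := (by positivity : 0 ≤ c₁ * ‖y‖ ^ 2).trans (hVbound y).1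
  exact fun t => es_aclf_composite_boundedness_general
    (P := Matrix.toEuclideanCLM (𝕜 := ℝ) Γ⁻¹) (Γ := Matrix.toEuclideanCLM (𝕜 := ℝ) Γ)
    (Y := fun y => (Y y).toEuclideanLin.toContinuousLinearMap)
    (g := fun y => (g y).toEuclideanLin) (Λ := fun s => Matrix.toEuclideanCLM (𝕜 := ℝ) (Λ s))
    θ hγ.le hc₁ (iInf_eigenvalues_pos hinv hΓpd.inv)
    (Matrix.isSymmetric_toEuclideanLin_iff.mpr hinv)
    (toEuclideanCLM_inv_apply_toEuclideanCLM hΓpd.isUnit)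
    (fun e => ⟨iInf_eigenvalues_mul_le_re_inner_toEuclideanCLM_self hinv e,
      re_inner_toEuclideanCLM_self_le_iSup_eigenvalues_mul hinv e⟩)
    hV hVbound (fun s _ => Matrix.isPositive_toEuclideanLin_iff.mpr (hΛpsd s))
    (fun s hs => (hx s hs).hasDerivWithinAt)
    (fun s hs => adjoint_toEuclideanLin_apply (Y (x s)) _ ▸ (hθhat s hs).hasDerivWithinAt)
    (fun s hs => (hclf s hs).trans <|
      mul_nonpos_of_nonpos_of_nonneg (neg_nonpos.mpr hc₃.le) (hV_nonneg (x s)))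
end

section
/- Under the hypotheses of the previous statement (uncertain dynamics x'(t) = f(x(t)) + Y(x(t))·θ + g(x(t))·u(t); update law θ̂'(t) = Γ·((Y(x(t)))ᵀ·∇V(x(t))) + γ·Γ·Λ(t)·(θ − θ̂(t)) with Γ symmetric positive definite, γ > 0, and each Λ(t) symmetric positive semidefinite; V differentiable with c₁‖x‖² ≤ V(x) ≤ c₂‖x‖²; and aCLF condition ⟨∇V(x(t)), f(x(t)) + Y(x(t))·θ̂(t) + g(x(t))·u(t)⟩ ≤ −c₃·V(x(t)) for all t ≥ 0 with c₃ > 0), assume additionally that the function t ↦ V(x(t)) is uniformly continuous on [0, ∞). Then V(x(t)) → 0 as t → ∞, and consequently x(t) → 0 as t → ∞. -/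
open Filter
open scoped InnerProductSpace

/-!
Measuring the parameter error in the `Γ⁻¹` inner product is what makes adaptation work: along the
closed loop the unknown term `⟪∇V, Y (θ - θ̂)⟫` in the derivative of `V` is cancelled exactly by the
term `Γ Yᵀ ∇V` of the update law, so the derivative of `V_a = V + ½ ⟪θ - θ̂, Γ⁻¹ (θ - θ̂)⟫` is the
nominal one, computed with `θ̂` in place of `θ`, minus `γ ⟪θ - θ̂, Λ (θ - θ̂)⟫ ≥ 0`. Hence
`V_a' ≤ -c₃ V`, and since `V_a ≥ 0` the function `t ↦ V (x t)` is integrable on `[0, ∞)`. Barbalat's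
lemma turns this into `V (x t) → 0`.
-/

section Barbalat

open Set MeasureTheory Topology

theorem tendsto_intervalIntegral_add_atTop_zero {E : Type*} [NormedAddCommGroup E]
    [NormedSpace ℝ E] {f : ℝ → E} {a : ℝ} (hf : IntegrableOn f (Ioi a)) (d : ℝ) :
    Tendsto (fun t => ∫ s in t..t + d, f s) atTop (𝓝 0) := by
  have hlim := intervalIntegral_tendsto_integral_Ioi a hf tendsto_id
  have hshift := hlim.comp (tendsto_atTop_add_const_right atTop d tendsto_id)
  have hsub := hshift.sub hlim
  rw [sub_self] at hsub
  refine hsub.congr' ?_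
  filter_upwards [eventually_ge_atTop a, eventually_ge_atTop (a - d)] with t ht htd
  have hint : ∀ b, a ≤ b → IntervalIntegrable f volume a b := fun b hab =>
    (intervalIntegrable_iff_integrableOn_Ioc_of_le hab).2 (hf.mono_set Ioc_subset_Ioi_self)
  exact intervalIntegral.integral_interval_sub_left (hint (t + d) (sub_le_iff_le_add.1 htd))
    (hint t ht)

theorem sub_mul_le_intervalIntegral {f : ℝ → ℝ} {a b m : ℝ} (hab : a ≤ b)
    (hf : IntervalIntegrable f volume a b) (hm : ∀ s ∈ Icc a b, m ≤ f s) :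
    (b - a) * m ≤ ∫ s in a..b, f s := by
  simpa using intervalIntegral.integral_mono_on hab intervalIntegrable_const hf hm

theorem tendsto_zero_of_uniformContinuousOn_of_integrableOn_Ioi {E : Type*}
    [NormedAddCommGroup E] {f : ℝ → E} {a : ℝ} (hf : UniformContinuousOn f (Ici a))
    (hint : IntegrableOn f (Ioi a)) : Tendsto f atTop (𝓝 0) := by
  rw [NormedAddGroup.tendsto_nhds_zero]
  intro ε hε
  obtain ⟨δ, hδ, hfδ⟩ := Metric.uniformContinuousOn_iff.1 hf (ε / 2) (half_pos hε)
  have hd : 0 < δ / 2 := half_pos hδ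
  have hsmall : ∀ᶠ t in atTop, ∫ s in t..t + δ / 2, ‖f s‖ < δ / 2 * (ε / 2) :=
    (tendsto_intervalIntegral_add_atTop_zero hint.norm (δ / 2)).eventually_lt_const (by positivity)
  filter_upwards [hsmall, eventually_ge_atTop a] with t hts hat
  have hnear : ∀ s ∈ Icc t (t + δ / 2), ‖f t‖ - ε / 2 ≤ ‖f s‖ := by
    intro s hs
    have hdist : dist t s < δ := by
      rw [dist_comm, Real.dist_eq, abs_of_nonneg (sub_nonneg.2 hs.1)]
      linarith [hs.2]
    have hclose := hfδ t hat s (hat.trans hs.1) hdist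
    rw [dist_eq_norm] at hclose
    linarith [norm_sub_norm_le (f t) (f s)]
  have hnorm : IntervalIntegrable (fun s => ‖f s‖) volume t (t + δ / 2) :=
    (hf.continuousOn.norm.mono fun s hs => hat.trans hs.1).intervalIntegrable_of_Icc (by linarith)
  have hlower := sub_mul_le_intervalIntegral (by linarith) hnorm hnear
  rw [add_sub_cancel_left] at hlower
  linarith [lt_of_mul_lt_mul_left (hlower.trans_lt hts) hd.le]

theorem integrableOn_Ioi_of_hasDerivWithinAt_le_neg_mul {W W' v : ℝ → ℝ} {a B c : ℝ} (hc : 0 < c)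
    (hW : ∀ t ∈ Ici a, HasDerivWithinAt W (W' t) (Ici a) t)
    (hW' : ∀ t ∈ Ici a, W' t ≤ -c * v t) (hB : ∀ t ∈ Ici a, B ≤ W t)
    (hv : ∀ t ∈ Ici a, 0 ≤ v t) (hvcont : ContinuousOn v (Ici a)) : IntegrableOn v (Ioi a) := by
  have hvint : ∀ T, IntegrableOn v (Icc a T) := fun T =>
    (hvcont.mono Icc_subset_Ici_self).integrableOn_Icc
  refine integrableOn_Ioi_of_intervalIntegral_norm_bounded ((W a - B) / c) a
    (fun T => (hvint T).mono_set Ioc_subset_Icc_self) tendsto_id ?_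
  filter_upwards [eventually_ge_atTop a] with T hT
  have hdrop : W T - W a ≤ ∫ s in a..T, -c * v s :=
    intervalIntegral.sub_le_integral_of_hasDeriv_right_of_le hT
      (fun s hs => (hW s hs.1).continuousWithinAt.mono Icc_subset_Ici_self)
      (fun s hs => (hW s hs.1.le).mono fun r hr => hs.1.le.trans (mem_Ioi.1 hr).le)
      ((hvint T).const_mul (-c)) (fun s hs => hW' s hs.1.le)
  rw [intervalIntegral.integral_const_mul] at hdrop
  have hnorm : ∫ s in a..T, ‖v s‖ = ∫ s in a..T, v s :=
    intervalIntegral.integral_congr fun s hs =>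
      Real.norm_of_nonneg (hv s (uIcc_of_le hT ▸ hs).1)
  simp only [hnorm, le_div_iff₀ hc]
  linarith [hB T hT]

end Barbalat

theorem tendsto_zero_of_mul_norm_sq_le {ι E : Type*} [SeminormedAddCommGroup E] {l : Filter ι}
    {x : ι → E} {v : ι → ℝ} {c : ℝ} (hc : 0 < c) (hv : Tendsto v l (nhds 0))
    (hle : ∀ i, c * ‖x i‖ ^ 2 ≤ v i) : Tendsto x l (nhds 0) := by
  have hsq : Tendsto (fun i => ‖x i‖ ^ 2) l (nhds 0) :=
    squeeze_zero (fun i => by positivity) (fun i => (le_div_iff₀' hc).2 (hle i))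
      (by simpa using hv.div_const c)
  exact tendsto_zero_iff_norm_tendsto_zero.2 (by simpa using hsq.sqrt)

theorem hasDerivWithinAt_inner_self_of_isSymmetric {F : Type*} [NormedAddCommGroup F]
    [InnerProductSpace ℝ F] {T : F →L[ℝ] F} (hT : (T : F →ₗ[ℝ] F).IsSymmetric)
    {e : ℝ → F} {e' : F} {s : Set ℝ} {t : ℝ} (he : HasDerivWithinAt e e' s t) :
    HasDerivWithinAt (fun r => ⟪T (e r), e r⟫_ℝ) (2 * ⟪T (e t), e'⟫_ℝ) s t := by
  have hquad := (hT.hasStrictFDerivAt_reApplyInnerSelf (e t)).hasFDerivAt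
  simpa [two_mul, two_smul] using! hquad.comp_hasDerivWithinAt t he

section AdaptiveLyapunov

variable {E P : Type*} [NormedAddCommGroup P] [InnerProductSpace ℝ P]

/-- The augmented Lyapunov function `V_a = V + ½ ⟪θ - θ̂, Γ⁻¹ (θ - θ̂)⟫` of adaptive control, at the
state `y` and the parameter estimate `ϑ`. The adaptation gain `Γ` is an equivalence, so that `Γ⁻¹`
is `Γ.symm`. -/
noncomputable def adaptiveLyapunov (V : E → ℝ) (Γ : P ≃L[ℝ] P) (θ : P) (y : E) (ϑ : P) : ℝ :=
  V y + 1 / 2 * ⟪Γ.symm (θ - ϑ), θ - ϑ⟫_ℝ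

theorem adaptiveLyapunov_nonneg {V : E → ℝ} {Γ : P ≃L[ℝ] P}
    (hΓ : (Γ : P →ₗ[ℝ] P).IsPositive) {y : E} (hV : 0 ≤ V y) (θ ϑ : P) :
    0 ≤ adaptiveLyapunov V Γ θ y ϑ := by
  have hquad : 0 ≤ ⟪Γ.symm (θ - ϑ), θ - ϑ⟫_ℝ :=
    (LinearMap.IsPositive.toLinearMap_symm (T := Γ.toLinearEquiv) hΓ).inner_nonneg_left _
  unfold adaptiveLyapunov
  positivity

variable [NormedAddCommGroup E] [InnerProductSpace ℝ E]

theorem hasDerivWithinAt_adaptiveLyapunov [CompleteSpace E] {V : E → ℝ} {Γ : P ≃L[ℝ] P}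
    (hΓ : (Γ : P →ₗ[ℝ] P).IsSymmetric) (θ : P) {x : ℝ → E} {θhat : ℝ → P} {gradV x' : E} {θhat' : P}
    {s : Set ℝ} {t : ℝ} (hV : HasGradientAt V gradV (x t)) (hx : HasDerivWithinAt x x' s t)
    (hθhat : HasDerivWithinAt θhat θhat' s t) :
    HasDerivWithinAt (fun r => adaptiveLyapunov V Γ θ (x r) (θhat r))
      (⟪gradV, x'⟫_ℝ - ⟪θ - θhat t, Γ.symm θhat'⟫_ℝ) s t := by
  have hΓsymm : ((Γ.symm : P →L[ℝ] P) : P →ₗ[ℝ] P).IsSymmetric :=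
    LinearMap.IsSymmetric.toLinearMap_symm (T := Γ.toLinearEquiv) hΓ
  have hVx : HasDerivWithinAt (fun r => V (x r)) ⟪gradV, x'⟫_ℝ s t :=
    hV.hasFDerivAt.comp_hasDerivWithinAt t hx
  have hquad : HasDerivWithinAt (fun r => ⟪Γ.symm (θ - θhat r), θ - θhat r⟫_ℝ)
      (2 * ⟪Γ.symm (θ - θhat t), -θhat'⟫_ℝ) s t :=
    hasDerivWithinAt_inner_self_of_isSymmetric hΓsymm (hθhat.const_sub θ)
  refine (hVx.add (hquad.const_mul (1 / 2))).congr_deriv ?_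
  have hmove : ⟪Γ.symm (θ - θhat t), θhat'⟫_ℝ = ⟪θ - θhat t, Γ.symm θhat'⟫_ℝ :=
    hΓsymm (θ - θhat t) θhat'
  rw [inner_neg_right, hmove]
  ring

theorem inner_sub_inner_symm_update_eq [CompleteSpace E] [CompleteSpace P] (Γ : P ≃L[ℝ] P)
    (Y : P →L[ℝ] E) (Λ : P →ₗ[ℝ] P) (γ : ℝ) (θ ϑ : P) (z w : E) :
    ⟪z, w + Y θ⟫_ℝ - ⟪θ - ϑ, Γ.symm (Γ (Y.adjoint z) + γ • Γ (Λ (θ - ϑ)))⟫_ℝ =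
      ⟪z, w + Y ϑ⟫_ℝ - γ * ⟪θ - ϑ, Λ (θ - ϑ)⟫_ℝ := by
  have hcancel : ⟪θ - ϑ, Y.adjoint z⟫_ℝ = ⟪z, Y θ⟫_ℝ - ⟪z, Y ϑ⟫_ℝ := by
    rw [ContinuousLinearMap.adjoint_inner_right, real_inner_comm, map_sub, inner_sub_right]
  simp only [map_add, map_smul, Γ.symm_apply_apply, inner_add_right, real_inner_smul_right,
    hcancel]
  ring

theorem es_aclf_asymptotic_convergence_general [CompleteSpace E] [CompleteSpace P]
    {U : Type*} [AddCommGroup U] [Module ℝ U] {θ : P} {γ c₁ c₃ : ℝ} (hγ : 0 ≤ γ) (hc₁ : 0 < c₁)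
    (hc₃ : 0 < c₃) {Γ : P ≃L[ℝ] P} (hΓ : (Γ : P →ₗ[ℝ] P).IsPositive)
    {V : E → ℝ} {gradV : E → E} (hV : ∀ y, HasGradientAt V (gradV y) y)
    (hVbound : ∀ y, c₁ * ‖y‖ ^ 2 ≤ V y)
    {f : E → E} {Y : E → P →L[ℝ] E} {g : E → U →ₗ[ℝ] E} {u : ℝ → U}
    {Λ : ℝ → P →ₗ[ℝ] P} (hΛ : ∀ t, 0 ≤ t → ∀ z, 0 ≤ ⟪z, Λ t z⟫_ℝ)
    {x : ℝ → E} {θhat : ℝ → P}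
    (hx : ∀ t, 0 ≤ t →
      HasDerivWithinAt x (f (x t) + Y (x t) θ + g (x t) (u t)) (Set.Ici 0) t)
    (hθhat : ∀ t, 0 ≤ t → HasDerivWithinAt θhat
      (Γ ((Y (x t)).adjoint (gradV (x t))) + γ • Γ (Λ t (θ - θhat t))) (Set.Ici 0) t)
    (hclf : ∀ t, 0 ≤ t →
      ⟪gradV (x t), f (x t) + Y (x t) (θhat t) + g (x t) (u t)⟫_ℝ ≤ -c₃ * V (x t))
    (hVunif : UniformContinuousOn (fun t => V (x t)) (Set.Ici 0)) :
    Tendsto (fun t => V (x t)) atTop (nhds 0) ∧ Tendsto x atTop (nhds 0) := by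
  have hVnonneg : ∀ y, 0 ≤ V y := fun y => le_trans (by positivity) (hVbound y)
  have hdecay : ∀ t ∈ Set.Ici (0 : ℝ),
      ⟪gradV (x t), f (x t) + Y (x t) θ + g (x t) (u t)⟫_ℝ -
        ⟪θ - θhat t, Γ.symm (Γ ((Y (x t)).adjoint (gradV (x t))) +
          γ • Γ (Λ t (θ - θhat t)))⟫_ℝ ≤ -c₃ * V (x t) := by
    intro t ht
    rw [add_right_comm, inner_sub_inner_symm_update_eq, add_right_comm]
    linarith [hclf t ht, mul_nonneg hγ (hΛ t ht (θ - θhat t))]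
  have hint : MeasureTheory.IntegrableOn (fun t => V (x t)) (Set.Ioi 0) :=
    integrableOn_Ioi_of_hasDerivWithinAt_le_neg_mul hc₃
      (fun t ht => hasDerivWithinAt_adaptiveLyapunov hΓ.isSymmetric θ (hV (x t)) (hx t ht)
        (hθhat t ht))
      hdecay (fun t _ => adaptiveLyapunov_nonneg hΓ (hVnonneg (x t)) θ (θhat t))
      (fun t _ => hVnonneg (x t)) hVunif.continuousOn
  have hVlim := tendsto_zero_of_uniformContinuousOn_of_integrableOn_Ioi hVunif hint
  exact ⟨hVlim, tendsto_zero_of_mul_norm_sq_le hc₁ hVlim fun t => hVbound (x t)⟩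

end AdaptiveLyapunov

section Matrix

variable {𝕜 m n : Type*} [RCLike 𝕜] [Fintype m] [Fintype n] [DecidableEq n]

theorem exists_continuousLinearEquiv_coe_eq_toEuclideanLin {A : Matrix n n 𝕜} (hA : IsUnit A) :
    ∃ e : EuclideanSpace 𝕜 n ≃L[𝕜] EuclideanSpace 𝕜 n,
      (e : EuclideanSpace 𝕜 n →ₗ[𝕜] EuclideanSpace 𝕜 n) = Matrix.toEuclideanLin A :=
  ⟨.unitsEquiv 𝕜 _ (hA.map (Matrix.toEuclideanCLM (n := n) (𝕜 := 𝕜))).unit, rfl⟩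

theorem adjoint_toContinuousLinearMap_toEuclideanLin [DecidableEq m] (A : Matrix m n 𝕜) :
    (Matrix.toEuclideanLin A).toContinuousLinearMap.adjoint =
      (Matrix.toEuclideanLin A.conjTranspose).toContinuousLinearMap := by
  rw [Matrix.toEuclideanLin_conjTranspose_eq_adjoint, LinearMap.adjoint_toContinuousLinearMap]

end Matrix

/-- Lemma 2 (asymptotic convergence, LaSalle–Yoshizawa): under the ES-aCLF hypotheses
and uniform continuity of `t ↦ V(x(t))` on `[0, ∞)`, one has `V(x(t)) → 0` and
consequently `x(t) → 0` as `t → ∞`. -/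
theorem es_aclf_asymptotic_convergence
    (n p m : ℕ) (hn : 0 < n) (hp : 0 < p) (hm : 0 < m)
    (θ : EuclideanSpace ℝ (Fin p)) (γ : ℝ) (hγ : 0 < γ)
    (c₁ c₂ c₃ : ℝ) (hc₁ : 0 < c₁) (hc₂ : 0 < c₂) (hc₃ : 0 < c₃)
    (Γ : Matrix (Fin p) (Fin p) ℝ) (hΓsymm : Γ.IsSymm) (hΓpd : Γ.PosDef)
    (V : EuclideanSpace ℝ (Fin n) → ℝ)
    (gradV : EuclideanSpace ℝ (Fin n) → EuclideanSpace ℝ (Fin n))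
    (hV : ∀ y, HasGradientAt V (gradV y) y)
    (hVbound : ∀ x, c₁ * ‖x‖ ^ 2 ≤ V x ∧ V x ≤ c₂ * ‖x‖ ^ 2)
    (f : EuclideanSpace ℝ (Fin n) → EuclideanSpace ℝ (Fin n))
    (Y : EuclideanSpace ℝ (Fin n) → Matrix (Fin n) (Fin p) ℝ)
    (g : EuclideanSpace ℝ (Fin n) → Matrix (Fin n) (Fin m) ℝ)
    (u : ℝ → EuclideanSpace ℝ (Fin m))
    (Λ : ℝ → Matrix (Fin p) (Fin p) ℝ)
    (hΛsymm : ∀ t, (Λ t).IsSymm)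
    (hΛpsd : ∀ t, (Λ t).PosSemidef)
    (x : ℝ → EuclideanSpace ℝ (Fin n))
    (θhat : ℝ → EuclideanSpace ℝ (Fin p))
    (hx : ∀ t, 0 ≤ t → HasDerivAt x
      (f (x t) + Matrix.toEuclideanLin (Y (x t)) θ +
        Matrix.toEuclideanLin (g (x t)) (u t)) t)
    (hθhat : ∀ t, 0 ≤ t → HasDerivAt θhat
      (Matrix.toEuclideanLin Γ (Matrix.toEuclideanLin (Y (x t)).transpose (gradV (x t))) +
        γ • Matrix.toEuclideanLin Γ (Matrix.toEuclideanLin (Λ t) (θ - θhat t))) t)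
    (hclf : ∀ t, 0 ≤ t →
      ⟪gradV (x t), f (x t) + Matrix.toEuclideanLin (Y (x t)) (θhat t) +
          Matrix.toEuclideanLin (g (x t)) (u t)⟫_ℝ ≤ -c₃ * V (x t))
    (hVunif : UniformContinuousOn (fun t => V (x t)) (Set.Ici (0 : ℝ))) :
    Tendsto (fun t => V (x t)) atTop (nhds 0) ∧
      Tendsto x atTop (nhds 0) := by
  obtain ⟨G, hG⟩ := exists_continuousLinearEquiv_coe_eq_toEuclideanLin hΓpd.isUnit
  have hGapply : ∀ z, G z = Matrix.toEuclideanLin Γ z := LinearMap.congr_fun hG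
  refine es_aclf_asymptotic_convergence_general (Γ := G) (θhat := θhat)
    (Y := fun y => (Matrix.toEuclideanLin (Y y)).toContinuousLinearMap)
    (g := fun y => Matrix.toEuclideanLin (g y)) (Λ := fun t => Matrix.toEuclideanLin (Λ t))
    hγ.le hc₁ hc₃ (hG ▸ Matrix.isPositive_toEuclideanLin_iff.2 hΓpd.posSemidef) hV
    (fun y => (hVbound y).1)
    (fun t _ => (Matrix.isPositive_toEuclideanLin_iff.2 (hΛpsd t)).inner_nonneg_right)
    (fun t ht => (hx t ht).hasDerivWithinAt) (fun t ht => ?_) hclf hVunif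
  simpa only [adjoint_toContinuousLinearMap_toEuclideanLin,
    Matrix.conjTranspose_eq_transpose_of_trivial, LinearMap.coe_toContinuousLinearMap', hGapply]
    using (hθhat t ht).hasDerivWithinAt
end
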